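/- Let n, m ≥ 1, let f : ℂⁿ → ℂ^m be a continuous map, and let w₁, …, w_m be positive integers such that for all t ∈ ℂ, all v ∈ ℂⁿ, and all j, the j-th component satisfies f_j(t • v) = t^{w_j} · f_j(v). Suppose moreover that f(v) = 0 implies v = 0. Then f is a proper map, i.e., the preimage under f of every compact subset of ℂ^m is compact. -/

import Mathlib

/-- A continuous map that is weighted-homogeneous with positive weights and whose
only zero is the origin is proper: preimages of compact sets are compact. -/
theorem stmt_5 (n m : ℕ) (hn : 1 ≤ n) (hm : 1 ≤ m)
    (f : (Fin n → ℂ) → (Fin m → ℂ)) (hf : Continuous f)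
    (w : Fin m → ℕ) (hw : ∀ j, 0 < w j)
    (hhom : ∀ (t : ℂ) (v : Fin n → ℂ) (j : Fin m), f (t • v) j = t ^ (w j) * f v j)
    (hzero : ∀ v : Fin n → ℂ, f v = 0 → v = 0) :
    ∀ K : Set (Fin m → ℂ), IsCompact K → IsCompact (f ⁻¹' K) := by
  intro K hK
  obtain ⟨c, hc, hcf⟩ := (isCompact_sphere (0 : Fin n → ℂ) 1).exists_forall_le'
    (f := fun v => ‖f v‖) hf.norm.continuousOn (a := 0) (by
      intro u hu
      refine norm_pos_iff.2 fun h => ?_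
      have := hzero u h
      subst this
      simp at hu)
  obtain ⟨C, hC⟩ := hK.isBounded.exists_norm_le
  refine Metric.isCompact_of_isClosed_isBounded (hK.isClosed.preimage hf) ?_
  refine isBounded_iff_forall_norm_le.2 ⟨max 1 (C / c), fun v hv => ?_⟩
  rcases le_or_gt ‖v‖ 1 with h1 | h1
  · exact h1.trans (le_max_left _ _)
  refine le_trans ?_ (le_max_right _ _)
  have hr : 0 < ‖v‖ := by linarith
  have hu : ‖((‖v‖ : ℂ)⁻¹) • v‖ = 1 := by
    rw [norm_smul, norm_inv, Complex.norm_real, norm_norm, inv_mul_cancel₀ hr.ne']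
  have h2 := hcf (((‖v‖ : ℂ)⁻¹) • v) (by simpa using hu)
  have h3 : ‖f (((‖v‖ : ℂ)⁻¹) • v)‖ ≤ ‖v‖⁻¹ * C := by
    have hCv := hC _ hv
    refine (pi_norm_le_iff_of_nonneg
      (mul_nonneg (inv_nonneg.2 hr.le) ((norm_nonneg _).trans hCv))).2 fun j => ?_
    rw [hhom, norm_mul, norm_pow, norm_inv, Complex.norm_real, norm_norm]
    have h4 : ‖v‖⁻¹ ^ w j ≤ ‖v‖⁻¹ :=
      pow_le_of_le_one (inv_nonneg.2 hr.le) (inv_le_one_of_one_le₀ h1.le) (hw j).ne'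
    exact mul_le_mul h4 ((norm_le_pi_norm _ j).trans hCv) (norm_nonneg _) (inv_nonneg.2 hr.le)
  have h5 : c ≤ ‖v‖⁻¹ * C := le_trans h2 h3
  rw [le_div_iff₀ hc]
  rwa [← div_eq_inv_mul, le_div_iff₀ hr, mul_comm] at h5
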